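/- Growth bound for eigenfunctions of the linearized operator: let λ ∈ ℝ and let ξ: ℝⁿ → (n×n skew-symmetric real matrices)ⁿ be a smooth map satisfying −Lξ = λξ pointwise and ∫_{ℝⁿ} (‖ξ(y)‖_F² + Σ_{i,j} ‖∂_i ξ_j(y)‖_F²)·e^{−|y|²/4} dy < ∞. Then there exists a constant C (depending on ξ and λ) such that ‖ξ(y)‖_F ≤ C·(max(1, |y|))^{2λ − 1} for all y ∈ ℝⁿ. -/

import Mathlib

open scoped BigOperators

noncomputable section

/-- Euclidean space `ℝⁿ`. -/
abbrev En (n : ℕ) := EuclideanSpace ℝ (Fin n)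

/-- `n × n` real matrices, represented entrywise. -/
abbrev Mat (n : ℕ) := Fin n → Fin n → ℝ

variable {n : ℕ}

/-- Frobenius inner product `⟨A,B⟩_F = tr(AᵀB) = Σ_{μν} A_{μν} B_{μν}`. -/
def fipE (A B : Mat n) : ℝ := ∑ μ, ∑ ν, A μ ν * B μ ν

/-- Frobenius norm. -/
def fnormE (A : Mat n) : ℝ := Real.sqrt (fipE A A)

/-- Matrix commutator `[A, B] = AB − BA`, entrywise. -/
def brkt (A B : Mat n) : Mat n := fun μ ν => ∑ k, (A μ k * B k ν - B μ k * A k ν)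

/-- `A` is skew-symmetric. -/
def skewM (A : Mat n) : Prop := ∀ μ ν, A ν μ = -A μ ν

/-- Partial derivative `∂_i f` of a scalar function on `ℝⁿ`. -/
def pder (i : Fin n) (f : En n → ℝ) (y : En n) : ℝ :=
  fderiv ℝ f y (EuclideanSpace.single i 1)

/-- Euclidean Laplacian `Δf = Σ_i ∂_i ∂_i f` of a scalar function on `ℝⁿ`. -/
def lapS (f : En n → ℝ) (y : En n) : ℝ := ∑ i, pder i (fun z => pder i f z) y

/-- Componentwise partial derivative `∂_i u` of a matrix-valued function on `ℝⁿ`. -/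
def pderM (i : Fin n) (u : En n → Mat n) (y : En n) : Mat n :=
  fun μ ν => pder i (fun z => u z μ ν) y

/-- Componentwise Laplacian `Δu` of a matrix-valued function on `ℝⁿ`. -/
def lapM (u : En n → Mat n) (y : En n) : Mat n := fun μ ν => lapS (fun z => u z μ ν) y

/-- The constant `a = √(n−2)/(2√2)`. -/
def aC (n : ℕ) : ℝ := Real.sqrt ((n : ℝ) - 2) / (2 * Real.sqrt 2)

/-- The constant `b = (1/2)(6n − 12 − (n+2)√(2n−4))`. -/
def bC (n : ℕ) : ℝ := (1 / 2) * (6 * (n : ℝ) - 12 - ((n : ℝ) + 2) * Real.sqrt (2 * (n : ℝ) - 4))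

/-- `σ_i(y)`, the skew matrix with entries `(σ_i(y))^μ_ν = δ_{iν} y^μ − δ_{iμ} y^ν`. -/
def sigmaM (i : Fin n) (y : En n) : Mat n :=
  fun μ ν => (if i = ν then y μ else 0) - (if i = μ then y ν else 0)

/-- The soliton connection `W_i(y) = σ_i(y)/(a|y|² + b)`. -/
def Wc (i : Fin n) (y : En n) : Mat n :=
  fun μ ν => sigmaM i y μ ν / (aC n * ‖y‖ ^ 2 + bC n)

/-- The curvature `F_{ij} = ∂_i W_j − ∂_j W_i + [W_i, W_j]` of the soliton connection `W`. -/
def Fc (i j : Fin n) (y : En n) : Mat n :=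
  pderM i (Wc j) y - pderM j (Wc i) y + brkt (Wc i y) (Wc j y)

/-- The linearized operator `L` of the rescaled Yang–Mills de Turck flow at the soliton `W`:
`(Lu)_j = Δu_j − (1/2)Σ_i y_i ∂_i u_j − (1/2)u_j + 2Σ_i [W_i, ∂_i u_j]
  + Σ_i [W_i, [W_i, u_j]] + 2Σ_i [u_i, F_{ij}]`. -/
def Lop (u : En n → Fin n → Mat n) (y : En n) (j : Fin n) : Mat n :=
  lapM (fun z => u z j) y
    - (1 / 2 : ℝ) • (∑ i, y i • pderM i (fun z => u z j) y)
    - (1 / 2 : ℝ) • u y j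
    + (2 : ℝ) • ∑ i, brkt (Wc i y) (pderM i (fun z => u z j) y)
    + ∑ i, brkt (Wc i y) (brkt (Wc i y) (u y j))
    + (2 : ℝ) • ∑ i, brkt (u y i) (Fc i j y)

/-- Squared Frobenius norm of a tuple of matrices: `‖u‖_F² = Σ_j ‖u_j‖_F²`. -/
def tnormSq (v : Fin n → Mat n) : ℝ := ∑ j, fipE (v j) (v j)

/-- The Gaussian weight `ρ(y) = e^{−|y|²/4}`. -/
def gauss (y : En n) : ℝ := Real.exp (-‖y‖ ^ 2 / 4)

end


section Helpers
variable {n : ℕ}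

lemma pder_add' {i : Fin n} {f g : En n → ℝ} {y : En n} (hf : DifferentiableAt ℝ f y)
    (hg : DifferentiableAt ℝ g y) : pder i (fun z => f z + g z) y = pder i f y + pder i g y := by
  unfold pder; rw [fderiv_fun_add hf hg]; rfl

lemma pder_sub' {i : Fin n} {f g : En n → ℝ} {y : En n} (hf : DifferentiableAt ℝ f y)
    (hg : DifferentiableAt ℝ g y) : pder i (fun z => f z - g z) y = pder i f y - pder i g y := by
  unfold pder; rw [fderiv_fun_sub hf hg]; rfl

lemma pder_mul' {i : Fin n} {f g : En n → ℝ} {y : En n} (hf : DifferentiableAt ℝ f y)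
    (hg : DifferentiableAt ℝ g y) :
    pder i (fun z => f z * g z) y = pder i f y * g y + f y * pder i g y := by
  unfold pder; rw [fderiv_fun_mul hf hg]; simp; ring

lemma pder_sum' {ι : Type*} {s : Finset ι} {i : Fin n} {f : ι → En n → ℝ} {y : En n}
    (hf : ∀ k ∈ s, DifferentiableAt ℝ (f k) y) :
    pder i (fun z => ∑ k ∈ s, f k z) y = ∑ k ∈ s, pder i (f k) y := by
  unfold pder; rw [fderiv_fun_sum hf]; simp

lemma pder_comp' {i : Fin n} {φ : ℝ → ℝ} {φd : ℝ} {f : En n → ℝ} {y : En n}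
    (hφ : HasDerivAt φ φd (f y)) (hf : DifferentiableAt ℝ f y) :
    pder i (fun z => φ (f z)) y = φd * pder i f y := by
  unfold pder
  have := (hφ.comp_hasFDerivAt y hf.hasFDerivAt).fderiv
  change fderiv ℝ (φ ∘ f) y _ = _
  rw [this]; simp

lemma pder_coord {i j : Fin n} {y : En n} :
    pder i (fun z : En n => z j) y = if i = j then 1 else 0 := by
  unfold pder
  have : (fun z : En n => z j) = (EuclideanSpace.proj j : En n →L[ℝ] ℝ) := by ext; simp
  rw [this, ContinuousLinearMap.fderiv]
  simp [eq_comm]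

lemma pder_normsq {i : Fin n} {y : En n} : pder i (fun z : En n => ‖z‖ ^ 2) y = 2 * y i := by
  unfold pder
  rw [(hasStrictFDerivAt_norm_sq y).hasFDerivAt.fderiv]
  simp [EuclideanSpace.inner_single_right]

lemma pder_contDiff {i : Fin n} {f : En n → ℝ} (hf : ContDiff ℝ (⊤ : ℕ∞) f) :
    ContDiff ℝ (⊤ : ℕ∞) (pder i f) := by
  unfold pder
  exact (hf.fderiv_right (by simp)).clm_apply contDiff_const

lemma coord_contDiff {j : Fin n} : ContDiff ℝ (⊤ : ℕ∞) (fun z : En n => z j) :=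
  (EuclideanSpace.proj j : En n →L[ℝ] ℝ).contDiff

lemma cd_diff {f : En n → ℝ} (hf : ContDiff ℝ (⊤ : ℕ∞) f) (y : En n) : DifferentiableAt ℝ f y :=
  (hf.differentiable (by simp)) y

lemma gauss_contDiff : ContDiff ℝ (⊤ : ℕ∞) (gauss (n := n)) := by
  unfold gauss
  exact Real.contDiff_exp.comp ((contDiff_norm_sq ℝ).neg.div_const 4)

lemma pder_gauss {i : Fin n} {y : En n} : pder i gauss y = -(1 / 2) * y i * gauss y := by
  have h1 : HasDerivAt (fun t : ℝ => Real.exp (-t / 4)) (Real.exp (-(‖y‖ ^ 2) / 4) * (-1 / 4)) (‖y‖ ^ 2) :=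
    (((hasDerivAt_id _).neg).div_const 4).exp
  have h2 := pder_comp' (i := i) (f := fun z : En n => ‖z‖ ^ 2) h1 ((contDiff_norm_sq ℝ (n := 1)).differentiable (by simp) y)
  rw [pder_normsq] at h2
  change pder i (fun z : En n => Real.exp (-‖z‖ ^ 2 / 4)) y = _
  rw [h2, gauss]; ring

open MeasureTheory in
lemma integral_pder_zero {i : Fin n} {X : En n → ℝ} (hX : ContDiff ℝ (⊤ : ℕ∞) X)
    (hc : HasCompactSupport X) : Integrable (pder i X) ∧ ∫ y, pder i X y = 0 := by
  have hc' : HasCompactSupport (pder i X) := hc.fderiv_apply (𝕜 := ℝ) _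
  have hI : Integrable (pder i X) := (pder_contDiff hX).continuous.integrable_of_hasCompactSupport hc'
  refine ⟨hI, ?_⟩
  have := integral_mul_fderiv_eq_neg_fderiv_mul_of_integrable (μ := volume) (𝕜 := ℝ)
    (f := fun _ : En n => (1 : ℝ)) (g := X)
    (v := EuclideanSpace.single i 1) (by simp)
    (by simp only [one_mul]; exact hI)
    (by simpa using hX.continuous.integrable_of_hasCompactSupport hc) (by simp)
    (fun x _ => cd_diff hX x)
  simpa [pder] using this

/-- Pointwise lower bound used in the energy estimate. -/
lemma ptwise_lower (f Z : ℝ) (Y P : Fin n → ℝ) (φ : ℝ) (hf : 0 < f)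
    (h : f * Z ≥ (1 / 2) * ∑ i, Y i ^ 2) :
    φ ^ 2 * (∑ i, Y i ^ 2) / (4 * (f + 1)) ≤
      2 * φ * (∑ i, P i * Y i) + φ ^ 2 * Z + 4 * f * ∑ i, P i ^ 2 := by
  have hS : 0 ≤ ∑ i, Y i ^ 2 := Finset.sum_nonneg fun i _ => sq_nonneg _
  have h0 : φ ^ 2 * (∑ i, Y i ^ 2) / (4 * (f + 1)) ≤ φ ^ 2 * (∑ i, Y i ^ 2) / (4 * f) := by
    gcongr; linarith
  have h1 : 0 ≤ ∑ i, (φ * Y i + 4 * f * P i) ^ 2 := Finset.sum_nonneg fun i _ => sq_nonneg _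
  have h2 : ∑ i, (φ * Y i + 4 * f * P i) ^ 2 =
      φ ^ 2 * (∑ i, Y i ^ 2) + 8 * f * φ * (∑ i, P i * Y i) + 16 * f ^ 2 * ∑ i, P i ^ 2 := by
    simp only [Finset.mul_sum, ← Finset.sum_add_distrib]
    exact Finset.sum_congr rfl fun i _ => by ring
  refine h0.trans ?_
  rw [div_le_iff₀ (by positivity)]
  nlinarith [mul_le_mul_of_nonneg_left h (sq_nonneg φ)]

open MeasureTheory in
lemma energy (f l : En n → ℝ) (hf : ContDiff ℝ (⊤ : ℕ∞) f) (hl : ContDiff ℝ (⊤ : ℕ∞) l)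
    (hf0 : ∀ y, 0 ≤ f y) (hI : Integrable (fun y => f y * gauss y)) (M : ℝ) (hM : 0 ≤ M)
    (hsub : ∀ y, M < f y * Real.exp (-l y) →
      f y * (lapS f y - (1 / 2) * ∑ i, y i * pder i f y - ∑ i, pder i f y * pder i l y
        - f y * (lapS l y - (1 / 2) * ∑ i, y i * pder i l y))
        ≥ (1 / 2) * ∑ i, (pder i f y - f y * pder i l y) ^ 2)
    (y0 : En n) (hy0 : f y0 * Real.exp (-l y0) ≤ M) :
    ∀ y, f y * Real.exp (-l y) ≤ M := by
  set p : En n → ℝ := fun y => f y * Real.exp (-l y) with hp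
  set Y : Fin n → En n → ℝ := fun i y => pder i f y - f y * pder i l y with hY
  set θ : En n → ℝ := fun y => Real.smoothTransition (p y - M) with hθ
  have hel : ContDiff ℝ (⊤ : ℕ∞) (fun y => Real.exp (-l y)) := Real.contDiff_exp.comp hl.neg
  have hps : ContDiff ℝ (⊤ : ℕ∞) p := hf.mul hel
  have hYs : ∀ i, ContDiff ℝ (⊤ : ℕ∞) (Y i) := fun i =>
    (pder_contDiff hf).sub (hf.mul (pder_contDiff hl))
  have hst : ContDiff ℝ (⊤ : ℕ∞) Real.smoothTransition := Real.smoothTransition.contDiff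
  have hθs : ContDiff ℝ (⊤ : ℕ∞) θ := hst.comp (hps.sub contDiff_const)
  have hpp : ∀ i y, pder i p y = Real.exp (-l y) * Y i y := by
    intro i y
    have h1 : pder i (fun z => Real.exp (-l z)) y = -Real.exp (-l y) * pder i l y := by
      have h1 : HasDerivAt (fun t : ℝ => Real.exp (-t)) (Real.exp (-(l y)) * (-1)) (l y) :=
        ((hasDerivAt_id _).neg).exp
      rw [pder_comp' (f := l) h1 (cd_diff hl y)]; ring
    rw [hp, pder_mul' (cd_diff hf y) (cd_diff hel y), h1]
    simp only [hY]; ring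
  have hpθ : ∀ i y, pder i θ y =
      deriv Real.smoothTransition (p y - M) * (Real.exp (-l y) * Y i y) := by
    intro i y
    have h1 : HasDerivAt Real.smoothTransition (deriv Real.smoothTransition (p y - M))
        ((fun z => p z - M) y) :=
      ((hst.differentiable (by simp)) _).hasDerivAt
    rw [hθ, pder_comp' (f := fun z => p z - M) h1 (cd_diff (hps.sub contDiff_const) y),
      pder_sub' (cd_diff hps y) (by fun_prop), hpp]
    simp [pder]
  -- the continuous nonnegative integrand
  set H : En n → ℝ := fun y => θ y * gauss y * (∑ i, Y i y ^ 2) / (4 * (f y + 1)) with hH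
  have hθ0 : ∀ y, 0 ≤ θ y := fun y => Real.smoothTransition.nonneg _
  have hθ1 : ∀ y, θ y ≤ 1 := fun y => Real.smoothTransition.le_one _
  have hg0 : ∀ y : En n, 0 < gauss y := fun y => Real.exp_pos _
  have hS0 : ∀ y, 0 ≤ ∑ i, Y i y ^ 2 := fun y => Finset.sum_nonneg fun i _ => sq_nonneg _
  have hH0 : ∀ y, 0 ≤ H y := fun y => by
    have := hθ0 y; have := hg0 y; have := hS0 y; have := hf0 y
    simp only [hH]; positivity
  have hHc : Continuous H := by
    refine Continuous.div ?_ ?_ ?_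
    · exact (hθs.continuous.mul gauss_contDiff.continuous).mul
        (continuous_finsetSum _ fun i _ => (hYs i).continuous.pow 2)
    · exact continuous_const.mul (hf.continuous.add continuous_const)
    · intro y; have := hf0 y; positivity
  -- cutoff
  let χ : ContDiffBump (0 : En n) := ⟨1, 2, one_pos, one_lt_two⟩
  have hχs : ContDiff ℝ (⊤ : ℕ∞) χ := χ.contDiff
  have hB : ∃ B : ℝ, ∀ y, ∑ i, (pder i χ y) ^ 2 ≤ B := by
    have : ∀ i : Fin n, ∃ B : ℝ, ∀ y, ‖pder i χ y‖ ≤ B := fun i =>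
      HasCompactSupport.exists_bound_of_continuous
        (χ.hasCompactSupport.fderiv_apply (𝕜 := ℝ) _) (pder_contDiff hχs).continuous
    choose B hB using this
    refine ⟨∑ i, B i ^ 2, fun y => Finset.sum_le_sum fun i _ => ?_⟩
    have := hB i y
    rw [Real.norm_eq_abs] at this
    exact sq_le_sq' (by linarith [neg_abs_le (pder i χ y)]) ((le_abs_self _).trans this)
  obtain ⟨B, hB⟩ := hB
  have key : ∀ N : ℝ, 0 < N → ∫ y in Metric.ball (0 : En n) N, H y ≤
      4 * B * (∫ y, f y * gauss y) * (N⁻¹) ^ 2 := by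
    intro N hN
    set φ : En n → ℝ := fun y => χ (N⁻¹ • y) with hφ
    have hφs : ContDiff ℝ (⊤ : ℕ∞) φ := hχs.comp (contDiff_const_smul _)
    have hφc : HasCompactSupport φ :=
      χ.hasCompactSupport.comp_smul (inv_ne_zero hN.ne')
    have hpφ : ∀ i y, pder i φ y = N⁻¹ * pder i χ (N⁻¹ • y) := by
      intro i y
      unfold pder
      have := fderiv_comp_smul (f := (χ : En n → ℝ)) (c := N⁻¹) (x := y)
      rw [hφ, this]
      simp
    have hP2 : ∀ y, ∑ i, pder i φ y ^ 2 ≤ B * (N⁻¹) ^ 2 := by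
      intro y
      simp only [hpφ, mul_pow, ← Finset.mul_sum]
      rw [mul_comm]
      exact mul_le_mul_of_nonneg_right (hB _) (by positivity)
    set X : Fin n → En n → ℝ := fun i y => θ y * (φ y * φ y) * gauss y * Y i y with hX
    have hXs : ∀ i, ContDiff ℝ (⊤ : ℕ∞) (X i) := fun i =>
      ((hθs.mul (hφs.mul hφs)).mul gauss_contDiff).mul (hYs i)
    have hXc : ∀ i, HasCompactSupport (X i) := fun i =>
      ((hφc.mul_left (f := φ)).mul_left (f := θ)).mul_right.mul_right
    have hdiv : ∀ y, ∑ i, pder i (X i) y =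
        deriv Real.smoothTransition (p y - M) * Real.exp (-l y) * φ y ^ 2 * gauss y * (∑ i, Y i y ^ 2)
        + θ y * gauss y * (2 * φ y * (∑ i, pder i φ y * Y i y) + φ y ^ 2 *
          (lapS f y - (1 / 2) * ∑ i, y i * pder i f y - ∑ i, pder i f y * pder i l y
        - f y * (lapS l y - (1 / 2) * ∑ i, y i * pder i l y))) := by
      intro y
      have hpY : ∀ i, pder i (Y i) y = pder i (fun z => pder i f z) y -
          (pder i f y * pder i l y + f y * pder i (fun z => pder i l z) y) := by
        intro i
        simp only [hY]
        rw [pder_sub' (cd_diff (pder_contDiff hf) y)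
          (cd_diff (hf.mul (pder_contDiff hl)) y),
          pder_mul' (cd_diff hf y) (cd_diff (pder_contDiff hl) y)]
      have hpX : ∀ i, pder i (X i) y =
        deriv Real.smoothTransition (p y - M) * Real.exp (-l y) * φ y ^ 2 * gauss y * (Y i y ^ 2)
        + θ y * gauss y * (2 * φ y * (pder i φ y * Y i y) + φ y ^ 2 *
          (pder i (fun z => pder i f z) y - (1 / 2) * (y i * pder i f y) - pder i f y * pder i l y
        - f y * (pder i (fun z => pder i l z) y - (1 / 2) * (y i * pder i l y)))) := by
        intro i
        simp only [hX]
        rw [pder_mul' (cd_diff ((hθs.mul (hφs.mul hφs)).mul gauss_contDiff) y) (cd_diff (hYs i) y),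
          pder_mul' (cd_diff (hθs.mul (hφs.mul hφs)) y) (cd_diff gauss_contDiff y),
          pder_mul' (cd_diff hθs y) (cd_diff (hφs.mul hφs) y),
          pder_mul' (cd_diff hφs y) (cd_diff hφs y), pder_gauss, hpθ, hpY]
        simp only [hY]
        ring
      simp only [hpX, lapS, Finset.mul_sum, ← Finset.sum_add_distrib, ← Finset.sum_sub_distrib]
    have hlow : ∀ y, φ y ^ 2 * H y ≤ ∑ i, pder i (X i) y +
        4 * (B * (N⁻¹) ^ 2) * (f y * gauss y) := by
      intro y
      have hd0 : 0 ≤ deriv Real.smoothTransition (p y - M) :=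
        Real.smoothTransition.monotone.deriv_nonneg
      have hBN : 0 ≤ B * (N⁻¹) ^ 2 :=
        (Finset.sum_nonneg fun i _ => sq_nonneg _).trans (hP2 y)
      have h1 : 0 ≤ deriv Real.smoothTransition (p y - M) * Real.exp (-l y) * φ y ^ 2 * gauss y *
          (∑ i, Y i y ^ 2) := by
        have := hg0 y; have := hS0 y; positivity
      rw [hdiv]
      by_cases hpM : p y ≤ M
      · have : θ y = 0 := Real.smoothTransition.zero_of_nonpos (by linarith)
        simp only [hH, this]
        have := mul_nonneg (mul_nonneg (by norm_num : (0 : ℝ) ≤ 4) hBN)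
          (mul_nonneg (hf0 y) (hg0 y).le)
        simp only [zero_mul, zero_div, mul_zero, add_zero]
        linarith
      · push Not at hpM
        have hfp : 0 < f y := by
          rcases (hf0 y).lt_or_eq with h | h
          · exact h
          · exfalso
            simp only [hp, ← h, zero_mul] at hpM
            linarith
        have h2 := ptwise_lower (f y) _ (fun i => Y i y) (fun i => pder i φ y) (φ y) hfp (hsub y hpM)
        have h3 := mul_le_mul_of_nonneg_left h2 (mul_nonneg (hθ0 y) (hg0 y).le)
        have h4 : θ y * gauss y * (4 * f y * ∑ i, pder i φ y ^ 2) ≤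
            4 * (B * (N⁻¹) ^ 2) * (f y * gauss y) := by
          calc θ y * gauss y * (4 * f y * ∑ i, pder i φ y ^ 2)
              ≤ 1 * gauss y * (4 * f y * (B * (N⁻¹) ^ 2)) := by
                have := hg0 y
                have := hP2 y
                have := hθ1 y
                have : 0 ≤ ∑ i, pder i φ y ^ 2 := Finset.sum_nonneg fun i _ => sq_nonneg _
                gcongr
            _ = _ := by ring
        have h5 : φ y ^ 2 * H y = θ y * gauss y * (φ y ^ 2 * (∑ i, Y i y ^ 2) / (4 * (f y + 1))) := by
          simp only [hH]; ring
        rw [h5]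
        linarith
    have hXI : ∀ i, Integrable (pder i (X i)) ∧ ∫ y, pder i (X i) y = 0 := fun i =>
      integral_pder_zero (hXs i) (hXc i)
    have hφHI : Integrable (fun y => φ y ^ 2 * H y) := by
      refine Continuous.integrable_of_hasCompactSupport ((hφs.continuous.pow 2).mul hHc) ?_
      simp only [pow_two]
      exact (hφc.mul_left (f := φ)).mul_right
    calc ∫ y in Metric.ball (0 : En n) N, H y
        = ∫ y in Metric.ball (0 : En n) N, φ y ^ 2 * H y := by
          refine setIntegral_congr_fun measurableSet_ball fun y hy => ?_
          have : φ y = 1 := by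
            apply χ.one_of_mem_closedBall
            simp only [mem_closedBall_zero_iff, norm_smul, norm_inv, Real.norm_eq_abs, abs_of_pos hN]
            rw [mem_ball_zero_iff] at hy
            change N⁻¹ * ‖y‖ ≤ 1
            rw [inv_mul_le_iff₀ hN]; linarith
          simp [this]
      _ ≤ ∫ y, φ y ^ 2 * H y :=
          setIntegral_le_integral hφHI (Filter.Eventually.of_forall fun y =>
            mul_nonneg (sq_nonneg _) (hH0 y))
      _ ≤ ∫ y, (∑ i, pder i (X i) y + 4 * (B * (N⁻¹) ^ 2) * (f y * gauss y)) :=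
          integral_mono hφHI ((integrable_finsetSum _ fun i _ => (hXI i).1).add
            (hI.const_mul _)) hlow
      _ = _ := by
          rw [integral_add (integrable_finsetSum _ fun i _ => (hXI i).1) (hI.const_mul _),
            integral_finsetSum _ fun i _ => (hXI i).1, integral_const_mul]
          simp only [(hXI _).2, Finset.sum_const_zero]
          ring
  have hzero : ∀ R : ℝ, 0 < R → ∫ y in Metric.ball (0 : En n) R, H y = 0 := by
    intro R hR
    have hHb : ∀ N : ℝ, IntegrableOn H (Metric.ball (0 : En n) N) := fun N =>
      (hHc.continuousOn.integrableOn_compact (isCompact_closedBall 0 N)).mono_set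
        Metric.ball_subset_closedBall
    refine le_antisymm ?_ (integral_nonneg hH0)
    have ht : Filter.Tendsto (fun N : ℝ => 4 * B * (∫ y, f y * gauss y) * (N⁻¹) ^ 2)
        Filter.atTop (nhds (4 * B * (∫ y, f y * gauss y) * 0 ^ 2)) :=
      (tendsto_inv_atTop_zero.pow 2).const_mul _
    simp only [ne_eq, OfNat.ofNat_ne_zero, not_false_eq_true, zero_pow, mul_zero] at ht
    refine ge_of_tendsto ht ?_
    filter_upwards [Filter.eventually_ge_atTop R] with N hN
    exact (setIntegral_mono_set (hHb N) (Filter.Eventually.of_forall fun y => hH0 y)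
      (Metric.ball_subset_ball hN).eventuallyLE).trans (key N (hR.trans_le hN))
  have hHz : ∀ y, H y = 0 := by
    intro y
    by_contra hne
    have hpos : 0 < H y := lt_of_le_of_ne (hH0 y) (Ne.symm hne)
    set R := ‖y‖ + 1
    have hR : 0 < R := by positivity
    have hyR : y ∈ Metric.ball (0 : En n) R := by simp [R]
    have h1 := hzero R hR
    rw [setIntegral_eq_zero_iff_of_nonneg_ae (Filter.Eventually.of_forall fun y => hH0 y)
      ((hHc.continuousOn.integrableOn_compact (isCompact_closedBall 0 R)).mono_set
        Metric.ball_subset_closedBall)] at h1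
    have h2 := Measure.eqOn_open_of_ae_eq (X := En n) (Y := ℝ) h1 Metric.isOpen_ball
      hHc.continuousOn continuousOn_const
    exact hne (h2 hyR)
  have hgrad : ∀ y, fderiv ℝ θ y = 0 := by
    intro y
    have hi : ∀ i, pder i θ y = 0 := by
      intro i
      rw [hpθ]
      by_cases hpM : p y ≤ M
      · have : IsLocalMin Real.smoothTransition (p y - M) := by
          refine Filter.Eventually.of_forall fun z => ?_
          rw [Real.smoothTransition.zero_of_nonpos (x := p y - M) (by linarith)]
          exact Real.smoothTransition.nonneg _
        rw [this.deriv_eq_zero, zero_mul]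
      · push Not at hpM
        have hθp : 0 < θ y := Real.smoothTransition.pos_of_pos (by linarith)
        have h := hHz y
        have := hg0 y
        have := hf0 y
        have h2 : ∑ i, Y i y ^ 2 = 0 := by
          simp only [hH, div_eq_zero_iff, mul_eq_zero] at h
          rcases h with (h | h) | h
          · rcases h with h | h <;> linarith
          · exact h
          · exfalso; rcases h with h | h <;> linarith
        rw [Finset.sum_eq_zero_iff_of_nonneg fun i _ => sq_nonneg _] at h2
        have h3 : Y i y = 0 := pow_eq_zero_iff (two_ne_zero) |>.1 (h2 i (Finset.mem_univ i))
        rw [h3]; ring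
    apply ContinuousLinearMap.coe_injective
    refine (EuclideanSpace.basisFun (Fin n) ℝ).toBasis.ext fun i => ?_
    simpa [pder] using hi i
  intro y
  have hc := is_const_of_fderiv_eq_zero (𝕜 := ℝ) (hθs.differentiable (by simp)) hgrad y y0
  have : θ y0 = 0 := Real.smoothTransition.zero_of_nonpos (by simpa using hy0)
  rw [this] at hc
  have := Real.smoothTransition.zero_iff_nonpos.1 hc
  linarith

end Helpers

section Barrier
variable {n : ℕ}

/-- The logarithm of the barrier. -/
noncomputable def barL (α K : ℝ) (y : En n) : ℝ :=
  α * Real.log (1 + ‖y‖ ^ 2) - K * (1 + ‖y‖ ^ 2)⁻¹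

lemma s_contDiff : ContDiff ℝ (⊤ : ℕ∞) (fun y : En n => 1 + ‖y‖ ^ 2) :=
  contDiff_const.add (contDiff_norm_sq ℝ)

lemma s_pos (y : En n) : 0 < 1 + ‖y‖ ^ 2 := by positivity

lemma pder_s {i : Fin n} {y : En n} : pder i (fun z : En n => 1 + ‖z‖ ^ 2) y = 2 * y i := by
  rw [pder_add' (by fun_prop) (cd_diff (contDiff_norm_sq ℝ) y), pder_normsq]
  simp [pder]

lemma barL_contDiff (α K : ℝ) : ContDiff ℝ (⊤ : ℕ∞) (barL (n := n) α K) := by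
  unfold barL
  exact (contDiff_const.mul (s_contDiff.log fun y => (s_pos y).ne')).sub
    (contDiff_const.mul (s_contDiff.inv fun y => (s_pos y).ne'))

lemma pder_barL (α K : ℝ) (i : Fin n) (y : En n) :
    pder i (barL α K) y =
      2 * (α * (1 + ‖y‖ ^ 2)⁻¹ + K * ((1 + ‖y‖ ^ 2)⁻¹) ^ 2) * y i := by
  have hs := (s_pos y).ne'
  have h : HasDerivAt (fun t : ℝ => α * Real.log t - K * t⁻¹)
      (α * (1 + ‖y‖ ^ 2)⁻¹ - K * (-((1 + ‖y‖ ^ 2) ^ 2)⁻¹)) (1 + ‖y‖ ^ 2) :=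
    ((Real.hasDerivAt_log hs).const_mul α).sub ((hasDerivAt_inv hs).const_mul K)
  have := pder_comp' (i := i) (f := fun z : En n => 1 + ‖z‖ ^ 2) h (cd_diff s_contDiff y)
  rw [pder_s] at this
  change pder i (fun z : En n => α * Real.log (1 + ‖z‖ ^ 2) - K * (1 + ‖z‖ ^ 2)⁻¹) y = _
  rw [this, inv_pow]; ring

lemma pder2_barL (α K : ℝ) (i : Fin n) (y : En n) :
    pder i (fun z => pder i (barL α K) z) y =
      2 * (α * (1 + ‖y‖ ^ 2)⁻¹ + K * ((1 + ‖y‖ ^ 2)⁻¹) ^ 2)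
      - 4 * (α * ((1 + ‖y‖ ^ 2)⁻¹) ^ 2 + 2 * K * ((1 + ‖y‖ ^ 2)⁻¹) ^ 3) * (y i) ^ 2 := by
  have hs := (s_pos y).ne'
  have h : HasDerivAt (fun t : ℝ => 2 * (α * t⁻¹ + K * (t⁻¹) ^ 2))
      (2 * (α * (-((1 + ‖y‖ ^ 2) ^ 2)⁻¹) + K * ((2 : ℕ) * ((1 + ‖y‖ ^ 2)⁻¹) ^ (2 - 1) * (-((1 + ‖y‖ ^ 2) ^ 2)⁻¹))))
      (1 + ‖y‖ ^ 2) :=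
    (((hasDerivAt_inv hs).const_mul α).add (((hasDerivAt_inv hs).pow 2).const_mul K)).const_mul 2
  have h1 := pder_comp' (i := i) (f := fun z : En n => 1 + ‖z‖ ^ 2) h (cd_diff s_contDiff y)
  rw [pder_s] at h1
  have hc : ContDiff ℝ (⊤ : ℕ∞) (fun z : En n => 2 * (α * (1 + ‖z‖ ^ 2)⁻¹ + K * ((1 + ‖z‖ ^ 2)⁻¹) ^ 2)) := by
    have hi : ContDiff ℝ (⊤ : ℕ∞) (fun z : En n => (1 + ‖z‖ ^ 2)⁻¹) :=
      s_contDiff.inv fun y => (s_pos y).ne'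
    exact contDiff_const.mul ((contDiff_const.mul hi).add (contDiff_const.mul (hi.pow 2)))
  simp only [pder_barL]
  rw [pder_mul' (cd_diff hc y) (cd_diff coord_contDiff y), h1, pder_coord]
  simp only [← inv_pow, if_true]
  generalize (1 + ‖y‖ ^ 2)⁻¹ = t
  norm_num
  ring

lemma sum_sq_coord (y : En n) : ∑ i, (y i) ^ 2 = ‖y‖ ^ 2 := by
  rw [EuclideanSpace.real_norm_sq_eq]

/-- the scalar barrier inequality -/
lemma barrier_ineq (N α C : ℝ) : ∃ K S : ℝ, 1 ≤ S ∧ ∀ s : ℝ, S ≤ s →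
    (2 * N * (α * s⁻¹ + K * s⁻¹ ^ 2) - 4 * (α * s⁻¹ ^ 2 + 2 * K * s⁻¹ ^ 3) * (s - 1))
      - (α * s⁻¹ + K * s⁻¹ ^ 2) * (s - 1)
      + 2 * (α * s⁻¹ + K * s⁻¹ ^ 2) ^ 2 * (s - 1) ≤ -α - C * s⁻¹ := by
  set K : ℝ := 2 * N * α - 4 * α + α + 2 * α ^ 2 + C + 1 with hK
  -- with t = 1/s: lhs + α + C t = -t + t^2 * Q(t), |Q| ≤ S
  refine ⟨K, 1 + (|2 * N * K + 4 * α - 8 * K + K + 4 * α * K - 2 * α ^ 2|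
    + |8 * K + 2 * K ^ 2 - 4 * α * K| + |2 * K ^ 2|), le_add_of_nonneg_right (by positivity), ?_⟩
  intro s hs
  set q0 := 2 * N * K + 4 * α - 8 * K + K + 4 * α * K - 2 * α ^ 2
  set q1 := 8 * K + 2 * K ^ 2 - 4 * α * K
  have hs1 : 1 ≤ s := le_trans (le_add_of_nonneg_right (by positivity)) hs
  have hs0 : 0 < s := by linarith
  set t := s⁻¹ with ht
  have ht0 : 0 < t := inv_pos.2 hs0
  have ht1 : t ≤ 1 := inv_le_one_of_one_le₀ hs1
  have hst : s * t = 1 := mul_inv_cancel₀ hs0.ne'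
  have hmain : (2 * N * (α * t + K * t ^ 2) - 4 * (α * t ^ 2 + 2 * K * t ^ 3) * (s - 1))
      - (α * t + K * t ^ 2) * (s - 1)
      + 2 * (α * t + K * t ^ 2) ^ 2 * (s - 1) - (-α - C * t) =
      -t + t ^ 2 * (q0 + q1 * t - 2 * K ^ 2 * t ^ 2) := by
    have e1 : s * t ^ 2 = t := by rw [pow_two, ← mul_assoc, hst, one_mul]
    have e2 : s * t ^ 3 = t ^ 2 := by
      rw [pow_succ' t 2, ← mul_assoc, hst, one_mul]
    have e3 : s * t ^ 4 = t ^ 3 := by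
      rw [pow_succ' t 3, ← mul_assoc, hst, one_mul]
    linear_combination (-α) * hst + (-4 * α - K + 2 * α ^ 2) * e1 + (-8 * K + 4 * α * K) * e2
      + 2 * K ^ 2 * e3 - t * hK
  have hb : q0 + q1 * t - 2 * K ^ 2 * t ^ 2 ≤ s := by
    have h1 : q1 * t ≤ |q1| := by
      calc q1 * t ≤ |q1| * t := by gcongr; exact le_abs_self _
        _ ≤ |q1| * 1 := by gcongr
        _ = _ := mul_one _
    have h2 : 0 ≤ 2 * K ^ 2 * t ^ 2 := by positivity
    have h3 := le_abs_self q0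
    have h4 := abs_nonneg (2 * K ^ 2)
    linarith
  have : t ^ 2 * (q0 + q1 * t - 2 * K ^ 2 * t ^ 2) ≤ t ^ 2 * s := by gcongr
  have e : t ^ 2 * s = t := by rw [pow_two, mul_assoc, mul_comm t s, hst, mul_one]
  linarith

open MeasureTheory in
lemma scalar_growth (f : En n → ℝ) (hf : ContDiff ℝ (⊤ : ℕ∞) f)
    (hf0 : ∀ y, 0 ≤ f y) (hI : Integrable (fun y => f y * gauss y)) (lam C : ℝ)
    (hsub : ∀ y, f y * (lapS f y - (1 / 2) * ∑ i, y i * pder i f y) ≥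
      (1 - 2 * lam - C * (1 + ‖y‖ ^ 2)⁻¹) * f y ^ 2 + (1 / 2) * ∑ i, pder i f y ^ 2) :
    ∃ M : ℝ, 0 ≤ M ∧ ∀ y, f y ≤ M * (1 + ‖y‖ ^ 2) ^ (2 * lam - 1) := by
  obtain ⟨K, S, hS, hKS⟩ := barrier_ineq n (2 * lam - 1) C
  set α := 2 * lam - 1 with hα
  set l : En n → ℝ := barL α K with hl
  have hls : ContDiff ℝ (⊤ : ℕ∞) l := barL_contDiff α K
  have hpc : Continuous (fun y => f y * Real.exp (-l y)) :=
    hf.continuous.mul (Real.continuous_exp.comp hls.continuous.neg)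
  obtain ⟨M0, hM0⟩ := ((isCompact_closedBall (0 : En n) (Real.sqrt S)).bddAbove_image
    hpc.continuousOn)
  set M := max M0 0
  have hM : ∀ y : En n, 1 + ‖y‖ ^ 2 ≤ S → f y * Real.exp (-l y) ≤ M := by
    intro y hy
    refine (hM0 ⟨y, ?_, rfl⟩).trans (le_max_left _ _)
    rw [mem_closedBall_zero_iff]
    exact Real.le_sqrt_of_sq_le (by linarith)
  have hle := energy f l hf hls hf0 hI M (le_max_right _ _) ?_ 0 (hM 0 (by simpa using hS))
  · refine ⟨M * Real.exp |K|, mul_nonneg (le_max_right _ _) (Real.exp_pos _).le, fun y => ?_⟩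
    have h1 := hle y
    have hsp := s_pos y
    have h2 : f y ≤ M * Real.exp (l y) := by
      rw [Real.exp_neg, ← div_eq_mul_inv, div_le_iff₀ (Real.exp_pos _)] at h1
      exact h1
    have h3 : Real.exp (l y) ≤ Real.exp |K| * (1 + ‖y‖ ^ 2) ^ α := by
      rw [Real.rpow_def_of_pos hsp, ← Real.exp_add]
      apply Real.exp_le_exp.2
      have h4 : -(K * (1 + ‖y‖ ^ 2)⁻¹) ≤ |K| := by
        have hi1 : (1 + ‖y‖ ^ 2)⁻¹ ≤ 1 := inv_le_one_of_one_le₀ (by nlinarith [sq_nonneg ‖y‖])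
        have hi0 : 0 ≤ (1 + ‖y‖ ^ 2)⁻¹ := by positivity
        calc -(K * (1 + ‖y‖ ^ 2)⁻¹) = (-K) * (1 + ‖y‖ ^ 2)⁻¹ := by ring
          _ ≤ |K| * (1 + ‖y‖ ^ 2)⁻¹ := by gcongr; exact neg_le_abs K
          _ ≤ |K| * 1 := by gcongr
          _ = _ := mul_one _
      simp only [hl, barL]
      linarith
    calc f y ≤ M * Real.exp (l y) := h2
      _ ≤ M * (Real.exp |K| * (1 + ‖y‖ ^ 2) ^ α) :=
        mul_le_mul_of_nonneg_left h3 (le_max_right _ _)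
      _ = _ := by ring
  · intro y hy
    have hSs : S ≤ 1 + ‖y‖ ^ 2 := by
      by_contra hcon
      push Not at hcon
      exact absurd (hM y hcon.le) (not_le.2 hy)
    have hb := hKS _ hSs
    have h1 := hsub y
    set G := α * (1 + ‖y‖ ^ 2)⁻¹ + K * ((1 + ‖y‖ ^ 2)⁻¹) ^ 2 with hG
    have hpl : ∀ i, pder i l y = 2 * G * y i := fun i => pder_barL α K i y
    have hlap : lapS l y = 2 * n * G
      - 4 * (α * ((1 + ‖y‖ ^ 2)⁻¹) ^ 2 + 2 * K * ((1 + ‖y‖ ^ 2)⁻¹) ^ 3) * ‖y‖ ^ 2 := by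
      simp only [lapS, hl, pder2_barL]
      rw [Finset.sum_sub_distrib, Finset.sum_const, ← Finset.mul_sum, sum_sq_coord]
      simp [hG]; ring
    have hyl : ∑ i, y i * pder i l y = 2 * G * ‖y‖ ^ 2 := by
      rw [← sum_sq_coord, Finset.mul_sum]
      exact Finset.sum_congr rfl fun i _ => by rw [hpl]; ring
    have hex : ∑ i, (pder i f y - f y * pder i l y) ^ 2 =
        ∑ i, pder i f y ^ 2 - 2 * f y * (∑ i, pder i f y * pder i l y)
          + f y ^ 2 * (4 * G ^ 2 * ‖y‖ ^ 2) := by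
      rw [← sum_sq_coord]
      simp only [Finset.mul_sum, ← Finset.sum_add_distrib, ← Finset.sum_sub_distrib]
      exact Finset.sum_congr rfl fun i _ => by rw [hpl]; ring
    rw [hex, hyl, hlap]
    rw [add_sub_cancel_left] at hb
    have hb2 := mul_le_mul_of_nonneg_left hb (sq_nonneg (f y))
    have hα' : 1 - 2 * lam = -α := by rw [hα]; ring
    rw [hα'] at h1
    nlinarith [h1, hb2]

end Barrier

section Alg
variable {n : ℕ}

lemma fipE_add_left (A B C : Mat n) : fipE (A + B) C = fipE A C + fipE B C := by
  simp [fipE, add_mul, Finset.sum_add_distrib]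

lemma fipE_sub_left (A B C : Mat n) : fipE (A - B) C = fipE A C - fipE B C := by
  simp [fipE, sub_mul, Finset.sum_sub_distrib]

lemma fipE_smul_left (c : ℝ) (A C : Mat n) : fipE (c • A) C = c * fipE A C := by
  simp [fipE, Finset.mul_sum, mul_assoc]

lemma fipE_sum_left {ι : Type*} (s : Finset ι) (A : ι → Mat n) (C : Mat n) :
    fipE (∑ i ∈ s, A i) C = ∑ i ∈ s, fipE (A i) C := by
  classical
  induction s using Finset.induction_on with
  | empty => simp [fipE]
  | insert a s ha ih => rw [Finset.sum_insert ha, Finset.sum_insert ha, fipE_add_left, ih]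

lemma fipE_comm (A B : Mat n) : fipE A B = fipE B A := by
  simp [fipE, mul_comm]

lemma fipE_brkt (W A B : Mat n) (hW : skewM W) : fipE (brkt W A) B = - fipE A (brkt W B) := by
  have e1 : fipE (brkt W A) B = ∑ μ, ∑ ν, ∑ k, W μ k * A k ν * B μ ν
      - ∑ μ, ∑ ν, ∑ k, A μ k * W k ν * B μ ν := by
    simp only [fipE, brkt, Finset.sum_mul, sub_mul, Finset.sum_sub_distrib]
  have e2 : fipE A (brkt W B) = ∑ μ, ∑ ν, ∑ k, A μ ν * (W μ k * B k ν)
      - ∑ μ, ∑ ν, ∑ k, A μ ν * (B μ k * W k ν) := by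
    simp only [fipE, brkt, Finset.mul_sum, mul_sub, Finset.sum_sub_distrib]
  have e3 : ∑ μ, ∑ ν, ∑ k, W μ k * A k ν * B μ ν = - ∑ μ, ∑ ν, ∑ k, A μ ν * (W μ k * B k ν) := by
    calc ∑ μ, ∑ ν, ∑ k, W μ k * A k ν * B μ ν
        = ∑ ν, ∑ μ, ∑ k, W μ k * A k ν * B μ ν := Finset.sum_comm
      _ = ∑ ν, ∑ k, ∑ μ, W μ k * A k ν * B μ ν :=
          Finset.sum_congr rfl fun _ _ => Finset.sum_comm
      _ = ∑ k, ∑ ν, ∑ μ, W μ k * A k ν * B μ ν := Finset.sum_comm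
      _ = _ := by
          simp only [← Finset.sum_neg_distrib]
          refine Finset.sum_congr rfl fun k _ => Finset.sum_congr rfl fun ν _ =>
            Finset.sum_congr rfl fun μ _ => ?_
          rw [hW k μ]; ring
  have e4 : ∑ μ, ∑ ν, ∑ k, A μ k * W k ν * B μ ν = - ∑ μ, ∑ ν, ∑ k, A μ ν * (B μ k * W k ν) := by
    simp only [← Finset.sum_neg_distrib]
    refine Finset.sum_congr rfl fun μ _ => ?_
    rw [Finset.sum_comm]
    refine Finset.sum_congr rfl fun k _ => Finset.sum_congr rfl fun ν _ => ?_
    rw [hW ν k]; ring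
  rw [e1, e2, e3, e4]; ring

lemma fipE_brkt_self (W A : Mat n) (hW : skewM W) : fipE (brkt W A) A = 0 := by
  have := fipE_brkt W A A hW
  rw [fipE_comm A] at this
  linarith

lemma fipE_self_nonneg (A : Mat n) : 0 ≤ fipE A A :=
  Finset.sum_nonneg fun _ _ => Finset.sum_nonneg fun _ _ => mul_self_nonneg _

lemma tnormSq_nonneg (v : Fin n → Mat n) : 0 ≤ tnormSq v :=
  Finset.sum_nonneg fun _ _ => fipE_self_nonneg _

lemma tuple_cs (u v : Fin n → Mat n) :
    (∑ j, fipE (u j) (v j)) ^ 2 ≤ (∑ j, fipE (u j) (u j)) * ∑ j, fipE (v j) (v j) := by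
  have h := Finset.sum_mul_sq_le_sq_mul_sq (Finset.univ : Finset (Fin n × Fin n × Fin n))
    (fun q => u q.1 q.2.1 q.2.2) (fun q => v q.1 q.2.1 q.2.2)
  simpa [Fintype.sum_prod_type, fipE, pow_two] using h

lemma entry_sq_le (u : Fin n → Mat n) (j μ ν : Fin n) : u j μ ν ^ 2 ≤ tnormSq u := by
  have h1 : u j μ ν ^ 2 ≤ ∑ ν, u j μ ν * u j μ ν := by
    rw [pow_two]
    exact Finset.single_le_sum (f := fun ν => u j μ ν * u j μ ν) (fun _ _ => mul_self_nonneg _)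
      (Finset.mem_univ ν)
  have h2 : ∑ ν, u j μ ν * u j μ ν ≤ fipE (u j) (u j) :=
    Finset.single_le_sum (f := fun μ => ∑ ν, u j μ ν * u j μ ν)
      (fun _ _ => Finset.sum_nonneg fun _ _ => mul_self_nonneg _) (Finset.mem_univ μ)
  have h3 : fipE (u j) (u j) ≤ tnormSq u :=
    Finset.single_le_sum (f := fun j => fipE (u j) (u j)) (fun _ _ => fipE_self_nonneg _)
      (Finset.mem_univ j)
  linarith

lemma curv_bound (u : Fin n → Mat n) (F : Fin n → Fin n → Mat n) (c : ℝ)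
    (hF : ∀ i j μ ν, |F i j μ ν| ≤ c) :
    ∑ j, ∑ i, fipE (brkt (u i) (F i j)) (u j) ≤ 2 * (n : ℝ) ^ 5 * c * tnormSq u := by
  have hprod' : ∀ i j a b k l aa bb, |u i a b * F i j k l * u j aa bb| ≤ c * tnormSq u := by
    intro i j a b k l aa bb
    have hc : 0 ≤ c := (abs_nonneg _).trans (hF i j k l)
    have h1 := entry_sq_le u i a b
    have h2 := entry_sq_le u j aa bb
    have h3 : |u i a b| * |u j aa bb| ≤ tnormSq u := by
      nlinarith [sq_nonneg (|u i a b| - |u j aa bb|), sq_abs (u i a b), sq_abs (u j aa bb)]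
    rw [abs_mul, abs_mul]
    calc |u i a b| * |F i j k l| * |u j aa bb| = |F i j k l| * (|u i a b| * |u j aa bb|) := by ring
      _ ≤ c * tnormSq u := by
        have := hF i j k l
        gcongr
  calc ∑ j, ∑ i, fipE (brkt (u i) (F i j)) (u j)
      ≤ ∑ j : Fin n, ∑ i : Fin n, ∑ μ : Fin n, ∑ ν : Fin n, ∑ k : Fin n, 2 * (c * tnormSq u) := by
        refine Finset.sum_le_sum fun j _ => Finset.sum_le_sum fun i _ => ?_
        unfold fipE brkt
        refine Finset.sum_le_sum fun μ _ => Finset.sum_le_sum fun ν _ => ?_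
        rw [Finset.sum_mul]
        refine Finset.sum_le_sum fun k _ => ?_
        have h1 := (le_abs_self _).trans (hprod' i j μ k k ν μ ν)
        have h2 := (neg_le_abs _).trans (hprod' i j k ν μ k μ ν)
        linarith
    _ = _ := by simp; ring

lemma Wc_skew (i : Fin n) (y : En n) : skewM (Wc i y) := by
  intro μ ν
  simp only [Wc, sigmaM]; ring

lemma aC_pos (hn : 5 ≤ n) : 0 < aC n := by
  have : (5 : ℝ) ≤ n := by exact_mod_cast hn
  unfold aC
  have : 0 < Real.sqrt ((n : ℝ) - 2) := Real.sqrt_pos.2 (by linarith)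
  positivity

lemma bC_pos (hn : 5 ≤ n) (hn' : n ≤ 9) : 0 < bC n := by
  have h5 : (5 : ℝ) ≤ n := by exact_mod_cast hn
  have h9 : (n : ℝ) ≤ 9 := by exact_mod_cast hn'
  unfold bC
  have h : Real.sqrt (2 * (n : ℝ) - 4) < (6 * n - 12) / (n + 2) := by
    rw [Real.sqrt_lt' (by apply div_pos <;> linarith), div_pow, lt_div_iff₀ (by positivity)]
    have : 0 < (n : ℝ) - 2 := by linarith
    have h3 : ((n : ℝ) + 2) ^ 2 < 18 * (n - 2) := by
      nlinarith
    nlinarith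
  rw [lt_div_iff₀ (by positivity)] at h
  linarith

lemma coord_abs_le (y : En n) (i : Fin n) : |y i| ≤ ‖y‖ := by
  simpa using PiLp.norm_apply_le y i

lemma sigma_bound (i : Fin n) (y : En n) (μ ν : Fin n) : |sigmaM i y μ ν| ≤ 2 * ‖y‖ := by
  unfold sigmaM
  have h1 := coord_abs_le y μ
  have h2 := coord_abs_le y ν
  have h0 := norm_nonneg y
  rw [abs_le] at *
  split_ifs <;> constructor <;> linarith

lemma sigma_contDiff (i μ ν : Fin n) : ContDiff ℝ (⊤ : ℕ∞) (fun y : En n => sigmaM i y μ ν) := by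
  unfold sigmaM
  split_ifs
  · exact coord_contDiff.sub coord_contDiff
  · exact coord_contDiff.sub contDiff_const
  · exact contDiff_const.sub coord_contDiff
  · exact contDiff_const.sub contDiff_const

lemma pder_const' (i : Fin n) (c : ℝ) (y : En n) : pder i (fun _ => c) y = 0 := by
  simp [pder]

lemma pder_sigma_bound (k i μ ν : Fin n) (y : En n) :
    |pder k (fun z => sigmaM i z μ ν) y| ≤ 2 := by
  have key : ∀ (P : Prop) [Decidable P] (m : Fin n),
      DifferentiableAt ℝ (fun z : En n => if P then z m else 0) y ∧
      |pder k (fun z : En n => if P then z m else 0) y| ≤ 1 := by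
    intro P _ m
    by_cases hP : P
    · simp only [hP, if_true]
      refine ⟨cd_diff coord_contDiff y, ?_⟩
      rw [pder_coord]; split_ifs <;> simp
    · simp only [hP, if_false]
      refine ⟨by fun_prop, ?_⟩
      rw [pder_const']; simp
  unfold sigmaM
  obtain ⟨d1, b1⟩ := key (i = ν) μ
  obtain ⟨d2, b2⟩ := key (i = μ) ν
  rw [pder_sub' d1 d2]
  have := abs_sub (pder k (fun z : En n => if i = ν then z μ else 0) y) (pder k (fun z : En n => if i = μ then z ν else 0) y)
  linarith

lemma Wc_bounds (hn : 5 ≤ n) (hn' : n ≤ 9) : ∃ c : ℝ, 0 ≤ c ∧ ∀ (y : En n) (i μ ν : Fin n),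
    |Wc i y μ ν| ≤ c * (‖y‖ * (1 + ‖y‖ ^ 2)⁻¹) ∧
    ∀ k, |pderM k (Wc i) y μ ν| ≤ c * (1 + ‖y‖ ^ 2)⁻¹ := by
  have ha := aC_pos hn
  have hb := bC_pos hn hn'
  set a := aC n with haa
  set b := bC n with hbb
  set m := min a b with hm
  have hm0 : 0 < m := lt_min ha hb
  have hq : ∀ y : En n, m * (1 + ‖y‖ ^ 2) ≤ a * ‖y‖ ^ 2 + b := fun y => by
    have h1 : m ≤ a := min_le_left _ _
    have h2 : m ≤ b := min_le_right _ _
    nlinarith [sq_nonneg ‖y‖]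
  refine ⟨2 / m + 4 * a / m ^ 2, by positivity, fun y i μ ν => ?_⟩
  have hs := s_pos y
  have hqp : 0 < a * ‖y‖ ^ 2 + b := lt_of_lt_of_le (by positivity) (hq y)
  have hqi : (a * ‖y‖ ^ 2 + b)⁻¹ ≤ m⁻¹ * (1 + ‖y‖ ^ 2)⁻¹ := by
    rw [← mul_inv]
    exact inv_anti₀ (by positivity) (hq y)
  have hqi0 : 0 < (a * ‖y‖ ^ 2 + b)⁻¹ := inv_pos.2 hqp
  set t := (1 + ‖y‖ ^ 2)⁻¹ with ht
  have ht0 : 0 < t := inv_pos.2 hs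
  have hrt : ‖y‖ ^ 2 * t ≤ 1 := by
    rw [ht, ← div_eq_mul_inv, div_le_one hs]; linarith
  have hσ := sigma_bound i y μ ν
  have hr := norm_nonneg y
  constructor
  · have : |Wc i y μ ν| ≤ 2 * ‖y‖ * (m⁻¹ * t) := by
      unfold Wc
      rw [div_eq_mul_inv, abs_mul, abs_of_pos hqi0]
      gcongr
    refine this.trans ?_
    have : 0 ≤ 4 * a / m ^ 2 * (‖y‖ * t) := by positivity
    calc 2 * ‖y‖ * (m⁻¹ * t) = 2 / m * (‖y‖ * t) := by ring
      _ ≤ _ := by rw [add_mul]; linarith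
  · intro k
    have hqd : ContDiff ℝ (⊤ : ℕ∞) (fun z : En n => a * ‖z‖ ^ 2 + b) :=
      (contDiff_const.mul (contDiff_norm_sq ℝ)).add contDiff_const
    have hdq : pder k (fun z : En n => a * ‖z‖ ^ 2 + b) y = 2 * a * y k := by
      rw [pder_add' (cd_diff (contDiff_const.mul (contDiff_norm_sq ℝ)) y) (by fun_prop),
        pder_mul' (by fun_prop) (cd_diff (contDiff_norm_sq ℝ) y), pder_normsq, pder_const',
        pder_const']
      ring
    have hdi := pder_comp' (i := k) (f := fun z : En n => a * ‖z‖ ^ 2 + b)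
      (hasDerivAt_inv hqp.ne') (cd_diff hqd y)
    rw [hdq] at hdi
    have hdid : DifferentiableAt ℝ (fun z : En n => (a * ‖z‖ ^ 2 + b)⁻¹) y :=
      (cd_diff hqd y).inv hqp.ne'
    have hW : pderM k (Wc i) y μ ν = pder k (fun z => sigmaM i z μ ν) y * (a * ‖y‖ ^ 2 + b)⁻¹ +
        sigmaM i y μ ν * (-((a * ‖y‖ ^ 2 + b) ^ 2)⁻¹ * (2 * a * y k)) := by
      unfold pderM Wc
      simp only [div_eq_mul_inv]
      rw [pder_mul' (cd_diff (sigma_contDiff i μ ν) y) hdid, hdi]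
    rw [hW]
    have h1 : |pder k (fun z => sigmaM i z μ ν) y * (a * ‖y‖ ^ 2 + b)⁻¹| ≤ 2 * (m⁻¹ * t) := by
      rw [abs_mul, abs_of_pos hqi0]
      have := pder_sigma_bound k i μ ν y
      gcongr
    have h2 : |sigmaM i y μ ν * (-((a * ‖y‖ ^ 2 + b) ^ 2)⁻¹ * (2 * a * y k))| ≤
        2 * ‖y‖ * ((m⁻¹ * t) ^ 2 * (2 * a * ‖y‖)) := by
      rw [abs_mul, abs_mul, abs_neg, ← inv_pow, abs_of_pos (pow_pos hqi0 2), abs_mul,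
        abs_of_pos (by positivity : 0 < 2 * a)]
      have := coord_abs_le y k
      gcongr
    have h3 : 2 * ‖y‖ * ((m⁻¹ * t) ^ 2 * (2 * a * ‖y‖)) ≤ 4 * a / m ^ 2 * t := by
      calc 2 * ‖y‖ * ((m⁻¹ * t) ^ 2 * (2 * a * ‖y‖)) = 4 * a / m ^ 2 * t * (‖y‖ ^ 2 * t) := by
            field_simp; ring
        _ ≤ 4 * a / m ^ 2 * t * 1 := by gcongr
        _ = _ := mul_one _
    have h4 := abs_add_le (pder k (fun z => sigmaM i z μ ν) y * (a * ‖y‖ ^ 2 + b)⁻¹)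
      (sigmaM i y μ ν * (-((a * ‖y‖ ^ 2 + b) ^ 2)⁻¹ * (2 * a * y k)))
    have h5 : 2 * (m⁻¹ * t) = 2 / m * t := by ring
    rw [add_mul]
    linarith

lemma Fc_bound (hn : 5 ≤ n) (hn' : n ≤ 9) : ∃ c : ℝ, ∀ (y : En n) (i j μ ν : Fin n),
    |Fc i j y μ ν| ≤ c * (1 + ‖y‖ ^ 2)⁻¹ := by
  obtain ⟨c, hc, h⟩ := Wc_bounds hn hn'
  refine ⟨2 * c + n * (2 * c ^ 2), fun y i j μ ν => ?_⟩
  have hs := s_pos y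
  set t := (1 + ‖y‖ ^ 2)⁻¹ with ht
  have ht0 : 0 < t := inv_pos.2 hs
  have hrt : ‖y‖ ^ 2 * t ≤ 1 := by
    rw [ht, ← div_eq_mul_inv, div_le_one hs]; linarith
  have hw2 : ∀ i j a b aa bb, |Wc i y a b * Wc j y aa bb| ≤ c ^ 2 * t := by
    intro i j a b aa bb
    have h1 := (h y i a b).1
    have h2 := (h y j aa bb).1
    have hr := norm_nonneg y
    rw [abs_mul]
    calc |Wc i y a b| * |Wc j y aa bb| ≤ (c * (‖y‖ * t)) * (c * (‖y‖ * t)) := by gcongr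
      _ = c ^ 2 * t * (‖y‖ ^ 2 * t) := by ring
      _ ≤ c ^ 2 * t * 1 := by gcongr
      _ = _ := mul_one _
  have hbr : |brkt (Wc i y) (Wc j y) μ ν| ≤ n * (2 * c ^ 2) * t := by
    unfold brkt
    refine (Finset.abs_sum_le_sum_abs _ _).trans ?_
    calc ∑ k, |Wc i y μ k * Wc j y k ν - Wc j y μ k * Wc i y k ν|
        ≤ ∑ k : Fin n, 2 * (c ^ 2 * t) := by
          refine Finset.sum_le_sum fun k _ => ?_
          have := abs_sub (Wc i y μ k * Wc j y k ν) (Wc j y μ k * Wc i y k ν)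
          have := hw2 i j μ k k ν
          have := hw2 j i μ k k ν
          linarith
      _ = _ := by simp; ring
  have h1 := (h y j μ ν).2 i
  have h2 := (h y i μ ν).2 j
  have e : Fc i j y μ ν = pderM i (Wc j) y μ ν - pderM j (Wc i) y μ ν
    + brkt (Wc i y) (Wc j y) μ ν := rfl
  rw [e]
  have h3 := abs_add_le (pderM i (Wc j) y μ ν - pderM j (Wc i) y μ ν) (brkt (Wc i y) (Wc j y) μ ν)
  have h4 := abs_sub (pderM i (Wc j) y μ ν) (pderM j (Wc i) y μ ν)
  linarith

end Alg

section Final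
variable {n : ℕ}

lemma entry_contDiff {ξ : En n → Fin n → Mat n} (hs : ContDiff ℝ (⊤ : ℕ∞) ξ) (j μ ν : Fin n) :
    ContDiff ℝ (⊤ : ℕ∞) (fun y => ξ y j μ ν) :=
  contDiff_pi.1 (contDiff_pi.1 (contDiff_pi.1 hs j) μ) ν

lemma tnormSq_contDiff {ξ : En n → Fin n → Mat n} (hs : ContDiff ℝ (⊤ : ℕ∞) ξ) :
    ContDiff ℝ (⊤ : ℕ∞) (fun y => tnormSq (ξ y)) := by
  unfold tnormSq fipE
  exact ContDiff.sum fun j _ => ContDiff.sum fun μ _ => ContDiff.sum fun ν _ =>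
    (entry_contDiff hs j μ ν).mul (entry_contDiff hs j μ ν)

lemma pder_sum3 (i : Fin n) (g : Fin n → Fin n → Fin n → En n → ℝ)
    (hg : ∀ j μ ν, ContDiff ℝ (⊤ : ℕ∞) (g j μ ν)) (y : En n) :
    pder i (fun z => ∑ j, ∑ μ, ∑ ν, g j μ ν z) y = ∑ j, ∑ μ, ∑ ν, pder i (g j μ ν) y := by
  rw [pder_sum' fun j _ => cd_diff (ContDiff.sum fun μ _ => ContDiff.sum fun ν _ => hg j μ ν) y]
  refine Finset.sum_congr rfl fun j _ => ?_
  rw [pder_sum' fun μ _ => cd_diff (ContDiff.sum fun ν _ => hg j μ ν) y]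
  refine Finset.sum_congr rfl fun μ _ => ?_
  rw [pder_sum' fun ν _ => cd_diff (hg j μ ν) y]

lemma pder_tnormSq {ξ : En n → Fin n → Mat n} (hs : ContDiff ℝ (⊤ : ℕ∞) ξ) (i : Fin n) (y : En n) :
    pder i (fun z => tnormSq (ξ z)) y = 2 * ∑ j, fipE (pderM i (fun z => ξ z j) y) (ξ y j) := by
  have h := entry_contDiff hs
  unfold tnormSq fipE
  rw [pder_sum3 i (fun j μ ν z => ξ z j μ ν * ξ z j μ ν) (fun j μ ν => (h j μ ν).mul (h j μ ν)) y]
  simp only [Finset.mul_sum]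
  refine Finset.sum_congr rfl fun j _ => Finset.sum_congr rfl fun μ _ =>
    Finset.sum_congr rfl fun ν _ => ?_
  rw [pder_mul' (cd_diff (h j μ ν) y) (cd_diff (h j μ ν) y)]
  simp only [pderM]; ring

lemma pder2_tnormSq {ξ : En n → Fin n → Mat n} (hs : ContDiff ℝ (⊤ : ℕ∞) ξ) (i : Fin n) (y : En n) :
    pder i (fun w => pder i (fun z => tnormSq (ξ z)) w) y =
      2 * ∑ j, ∑ μ, ∑ ν, pder i (fun w => pder i (fun z => ξ z j μ ν) w) y * ξ y j μ ν +
      2 * ∑ j, fipE (pderM i (fun z => ξ z j) y) (pderM i (fun z => ξ z j) y) := by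
  have h := entry_contDiff hs
  simp only [pder_tnormSq hs]
  have e : (fun w => 2 * ∑ j, fipE (pderM i (fun z => ξ z j) w) (ξ w j)) =
      fun w => ∑ j, ∑ μ, ∑ ν, (2 * pder i (fun z => ξ z j μ ν) w) * ξ w j μ ν := by
    funext w
    simp only [fipE, pderM, Finset.mul_sum, mul_assoc]
  have h2 : ∀ j μ ν, ContDiff ℝ (⊤ : ℕ∞) (fun w => 2 * pder i (fun z => ξ z j μ ν) w) :=
    fun j μ ν => contDiff_const.mul (pder_contDiff (h j μ ν))
  rw [e, pder_sum3 i (fun j μ ν w => (2 * pder i (fun z => ξ z j μ ν) w) * ξ w j μ ν)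
    (fun j μ ν => (h2 j μ ν).mul (h j μ ν)) y]
  simp only [fipE, Finset.mul_sum, ← Finset.sum_add_distrib]
  refine Finset.sum_congr rfl fun j _ => Finset.sum_congr rfl fun μ _ =>
    Finset.sum_congr rfl fun ν _ => ?_
  rw [pder_mul' (cd_diff (h2 j μ ν) y) (cd_diff (h j μ ν) y),
    pder_mul' (by fun_prop) (cd_diff (pder_contDiff (h j μ ν)) y), pder_const']
  simp only [pderM]; ring

lemma lap_tnormSq {ξ : En n → Fin n → Mat n} (hs : ContDiff ℝ (⊤ : ℕ∞) ξ) (y : En n) :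
    lapS (fun z => tnormSq (ξ z)) y = 2 * ∑ j, fipE (lapM (fun z => ξ z j) y) (ξ y j) +
      2 * ∑ j, ∑ i, fipE (pderM i (fun z => ξ z j) y) (pderM i (fun z => ξ z j) y) := by
  unfold lapS
  simp only [pder2_tnormSq hs, Finset.sum_add_distrib, ← Finset.mul_sum]
  congr 2
  · simp only [fipE, lapM, lapS, Finset.sum_mul]
    rw [Finset.sum_comm]
    refine Finset.sum_congr rfl fun j _ => ?_
    rw [Finset.sum_comm]
    refine Finset.sum_congr rfl fun μ _ => ?_
    rw [Finset.sum_comm]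
  · rw [Finset.sum_comm]

lemma bochner (lam : ℝ) (ξ : En n → Fin n → Mat n) (hs : ContDiff ℝ (⊤ : ℕ∞) ξ)
    (heig : ∀ (y : En n) (j : Fin n), Lop ξ y j = (-lam) • ξ y j) (c : ℝ)
    (hF : ∀ (y : En n) (i j μ ν : Fin n), |Fc i j y μ ν| ≤ c * (1 + ‖y‖ ^ 2)⁻¹) (y : En n) :
    tnormSq (ξ y) * (lapS (fun z => tnormSq (ξ z)) y
        - (1 / 2) * ∑ i, y i * pder i (fun z => tnormSq (ξ z)) y) ≥
      (1 - 2 * lam - (8 * (n : ℝ) ^ 5 * c) * (1 + ‖y‖ ^ 2)⁻¹) * tnormSq (ξ y) ^ 2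
        + (1 / 2) * ∑ i, pder i (fun z => tnormSq (ξ z)) y ^ 2 := by
  set u := ξ y with hu
  set D : Fin n → Fin n → Mat n := fun i j => pderM i (fun z => ξ z j) y with hD
  set E : Fin n → Fin n → Mat n := fun i j => D i j + brkt (Wc i y) (u j) with hE
  have hEE : ∀ i j, fipE (E i j) (E i j) = fipE (D i j) (D i j)
      - 2 * fipE (brkt (Wc i y) (D i j)) (u j)
      - fipE (brkt (Wc i y) (brkt (Wc i y) (u j))) (u j) := by
    intro i j
    have h1 := fipE_brkt (Wc i y) (D i j) (u j) (Wc_skew i y)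
    have h2 := fipE_brkt (Wc i y) (brkt (Wc i y) (u j)) (u j) (Wc_skew i y)
    simp only [hE]
    rw [fipE_add_left, fipE_comm (D i j) (D i j + _), fipE_comm (brkt _ _) (D i j + _),
      fipE_add_left, fipE_add_left, h1, h2, fipE_comm (brkt (Wc i y) (u j)) (D i j)]
    ring
  have hEu : ∀ i j, fipE (E i j) (u j) = fipE (D i j) (u j) := by
    intro i j
    simp only [hE]
    rw [fipE_add_left, fipE_brkt_self _ _ (Wc_skew i y), add_zero]
  have hgrad : ∀ i, pder i (fun z => tnormSq (ξ z)) y = 2 * ∑ j, fipE (E i j) (u j) := by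
    intro i
    rw [pder_tnormSq hs]
    simp only [hEu]
    rfl
  have hj : ∀ j, fipE (lapM (fun z => ξ z j) y) (u j) + ∑ i, fipE (D i j) (D i j) =
      (1 / 2) * ∑ i, y i * fipE (E i j) (u j) + (1 / 2 - lam) * fipE (u j) (u j)
      + ∑ i, fipE (E i j) (E i j) - 2 * ∑ i, fipE (brkt (u i) (Fc i j y)) (u j) := by
    intro j
    have h := congrArg (fun A => fipE A (u j)) (heig y j)
    simp only [Lop, fipE_add_left, fipE_sub_left, fipE_smul_left, fipE_sum_left] at h
    simp only [hEE, hEu, Finset.sum_sub_distrib, ← Finset.mul_sum]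
    simp only [← hu] at h
    change fipE (lapM (fun z => ξ z j) y) (u j) - 1 / 2 * ∑ i, y i * fipE (D i j) (u j)
      - 1 / 2 * fipE (u j) (u j) + 2 * ∑ i, fipE (brkt (Wc i y) (D i j)) (u j)
      + ∑ i, fipE (brkt (Wc i y) (brkt (Wc i y) (u j))) (u j)
      + 2 * ∑ i, fipE (brkt (u i) (Fc i j y)) (u j) = -lam * fipE (u j) (u j) at h
    linarith
  have hsum := Finset.sum_congr (rfl : (Finset.univ : Finset (Fin n)) = Finset.univ) fun j _ => hj j
  simp only [Finset.sum_add_distrib, Finset.sum_sub_distrib, ← Finset.mul_sum] at hsum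
  have hfu : ∑ j, fipE (u j) (u j) = tnormSq u := rfl
  rw [hfu] at hsum
  have hyg : ∑ i, y i * pder i (fun z => tnormSq (ξ z)) y =
      2 * ∑ j, ∑ i, y i * fipE (E i j) (u j) := by
    rw [Finset.sum_comm, Finset.mul_sum]
    refine Finset.sum_congr rfl fun i _ => ?_
    rw [hgrad, ← Finset.mul_sum]; ring
  have hlap := lap_tnormSq hs y
  have hL : lapS (fun z => tnormSq (ξ z)) y
        - (1 / 2) * ∑ i, y i * pder i (fun z => tnormSq (ξ z)) y =
      (1 - 2 * lam) * tnormSq u + 2 * ∑ j, ∑ i, fipE (E i j) (E i j)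
        - 4 * ∑ j, ∑ i, fipE (brkt (u i) (Fc i j y)) (u j) := by
    rw [hyg, hlap]
    change 2 * ∑ j, fipE (lapM (fun z => ξ z j) y) (u j) + 2 * ∑ j, ∑ i, fipE (D i j) (D i j) - _ = _
    linarith
  have hcb := curv_bound u (fun i j => Fc i j y) _ (hF y)
  have hcs : ∑ i, pder i (fun z => tnormSq (ξ z)) y ^ 2 ≤
      4 * ((∑ j, ∑ i, fipE (E i j) (E i j)) * tnormSq u) := by
    rw [Finset.sum_comm, Finset.sum_mul, Finset.mul_sum]
    refine Finset.sum_le_sum fun i _ => ?_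
    rw [hgrad, mul_pow]
    have := tuple_cs (E i) u
    rw [hfu] at this
    linarith
  rw [hL]
  have hf0 := tnormSq_nonneg u
  have h5 := mul_le_mul_of_nonneg_left hcb hf0
  nlinarith [h5, hcs]

end Final

open MeasureTheory in
/-- Growth bound for eigenfunctions of the linearized operator: if `ξ` is smooth, skew-valued,
satisfies `−Lξ = λξ` pointwise, and is in the Gaussian-weighted `H¹` space, then
`‖ξ(y)‖_F ≤ C·(max(1,|y|))^{2λ−1}` for some constant `C`. -/
theorem eigenfunction_growth_bound (n : ℕ) (hn : 5 ≤ n) (hn' : n ≤ 9)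
    (lam : ℝ) (ξ : En n → Fin n → Mat n)
    (hs : ContDiff ℝ (⊤ : ℕ∞) ξ) (hskew : ∀ y j, skewM (ξ y j))
    (heig : ∀ (y : En n) (j : Fin n), Lop ξ y j = (-lam) • ξ y j)
    (hint : Integrable (fun y : En n =>
      (tnormSq (ξ y) +
        ∑ i, ∑ j, fipE (pderM i (fun z => ξ z j) y) (pderM i (fun z => ξ z j) y)) * gauss y)) :
    ∃ C : ℝ, ∀ y : En n,
      Real.sqrt (tnormSq (ξ y)) ≤ C * (max 1 ‖y‖) ^ (2 * lam - 1) := by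
  obtain ⟨c, hc⟩ := Fc_bound hn hn'
  have hf := tnormSq_contDiff hs
  have hI : Integrable (fun y : En n => tnormSq (ξ y) * gauss y) := by
    refine hint.mono' (hf.continuous.mul gauss_contDiff.continuous).aestronglyMeasurable
      (Filter.Eventually.of_forall fun y => ?_)
    have hg : 0 < gauss y := Real.exp_pos _
    rw [Real.norm_eq_abs, abs_of_nonneg (mul_nonneg (tnormSq_nonneg _) hg.le)]
    refine mul_le_mul_of_nonneg_right (le_add_of_nonneg_right ?_) hg.le
    exact Finset.sum_nonneg fun _ _ => Finset.sum_nonneg fun _ _ => fipE_self_nonneg _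
  obtain ⟨M, hM0, hM⟩ := scalar_growth (fun y => tnormSq (ξ y)) hf (fun y => tnormSq_nonneg _) hI
    lam (8 * (n : ℝ) ^ 5 * c) (fun y => bochner lam ξ hs heig c hc y)
  set α := 2 * lam - 1 with hα
  refine ⟨Real.sqrt (M * 2 ^ |α|), fun y => ?_⟩
  set m := max 1 ‖y‖ with hm
  have hm1 : 1 ≤ m := le_max_left _ _
  have hm2 : ‖y‖ ≤ m := le_max_right _ _
  have hm0 : 0 < m := by linarith
  have hr := norm_nonneg y
  have hle : 1 + ‖y‖ ^ 2 ≤ 2 * m ^ 2 := by nlinarith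
  have hge : m ^ 2 ≤ 1 + ‖y‖ ^ 2 := by
    rcases max_choice 1 ‖y‖ with h | h
    · rw [hm, h]; nlinarith
    · rw [hm, h]; nlinarith
  have hpow : (1 + ‖y‖ ^ 2) ^ α ≤ 2 ^ |α| * (m ^ 2) ^ α := by
    rcases le_total 0 α with h | h
    · rw [abs_of_nonneg h, ← Real.mul_rpow (by norm_num) (by positivity)]
      exact Real.rpow_le_rpow (by positivity) hle h
    · have h1 : (1 + ‖y‖ ^ 2) ^ α ≤ (m ^ 2) ^ α :=
        Real.rpow_le_rpow_of_nonpos (by positivity) hge h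
      have h2 : (1 : ℝ) ≤ 2 ^ |α| := Real.one_le_rpow (by norm_num) (abs_nonneg _)
      have h3 : 0 ≤ (m ^ 2) ^ α := by positivity
      nlinarith
  have hsq : (m ^ 2) ^ α = (m ^ α) ^ 2 := by
    rw [← Real.rpow_natCast, ← Real.rpow_natCast, ← Real.rpow_mul hm0.le, ← Real.rpow_mul hm0.le,
      mul_comm]
  have hfin : tnormSq (ξ y) ≤ (M * 2 ^ |α|) * (m ^ α) ^ 2 := by
    rw [← hsq]
    calc tnormSq (ξ y) ≤ M * (1 + ‖y‖ ^ 2) ^ α := hM y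
      _ ≤ M * (2 ^ |α| * (m ^ 2) ^ α) := mul_le_mul_of_nonneg_left hpow hM0
      _ = _ := by ring
  calc Real.sqrt (tnormSq (ξ y)) ≤ Real.sqrt ((M * 2 ^ |α|) * (m ^ α) ^ 2) := Real.sqrt_le_sqrt hfin
    _ = _ := by
      rw [Real.sqrt_mul (by positivity), Real.sqrt_sq (by positivity)]
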